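/- arXiv:1909.10683 — 2 statements merged into one kernel-verified Lean document; each statement's English description precedes it below -/
import Mathlib

section
/- For every real ε ∈ (0,1) there exist a real R > 0 and a constant c > 0 (both depending only on ε) and an integer n₀ such that for every n ≥ n₀ there is a binary code C ⊆ {0,1}ⁿ with |C| ≥ 2^(R·n) with the following property: for all reals γ, δ ≥ 0 with γ + 2δ ≤ 1 − ε, the code C is list-decodable from ⌊δn⌋ deletions and ⌊γn⌋ insertions with list size at most c · 2^(2^(2^(log* n))). -/
/-- The length of a longest common subsequence of `x` and `y`. -/
noncomputable def LCS {α : Type*} (x y : List α) : ℕ :=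
  sSup {n | ∃ u : List α, u.Sublist x ∧ u.Sublist y ∧ u.length = n}

/-- `C` is list-decodable from `D` deletions and `I` insertions with list size `L`. -/
def listDecodable {α : Type*} (C : Finset (List α)) (D I : ℕ) (L : ℝ) : Prop :=
  ∀ y : List α,
    (({x | x ∈ C ∧ ∃ u : List α, u.Sublist x ∧ u.Sublist y ∧
        x.length - u.length ≤ D ∧ y.length - u.length ≤ I} : Set (List α)).ncard : ℝ) ≤ L

/-- `log* n`: the least `k` such that the `k`-fold iterate of `m ↦ ⌈log₂ m⌉` sends `n` to
a value `≤ 1`. -/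
noncomputable def logStar (n : ℕ) : ℕ := sInf {k | (Nat.clog 2)^[k] n ≤ 1}

/-! The inner code consists of the words `(0ʳ 1ʳ)ᵏ` of Bukh and Ma, of a common length and with run
lengths `r` growing by a large factor. If the letter densities of `y` in windows a little shorter
and a little longer than `r` agree, then the surplus `3 * LCS x y - |x| - |y|` for `x = (0ʳ 1ʳ)ᵏ` is
essentially nonpositive. A large surplus thus forces a large increment of the martingale of window
densities of `y` at the scale `r`; as the squared increments telescope, this happens at boundedly
many scales, so `y` matches boundedly many inner codewords well.

Let `q` be the number of inner codewords. The exponential of the surplus is nearly multiplicative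
under concatenation, so a word `y` has large surplus with at most `(q / 2) ^ N` of the `q ^ N`
concatenations of `N` inner codewords. An exponentially large outer code chosen greedily against an
exponential potential then meets each of these bad sets, one for every relevant `y`, in a bounded
number of words. -/

namespace InsDel

open Finset

variable {α ι : Type*}

section LCS

theorem bddAbove_length_common_sublist (x y : List α) :
    BddAbove {n | ∃ u : List α, u.Sublist x ∧ u.Sublist y ∧ u.length = n} :=
  ⟨x.length, by rintro _ ⟨u, hx, -, rfl⟩; exact hx.length_le⟩

theorem length_le_LCS {u x y : List α} (hx : u.Sublist x) (hy : u.Sublist y) :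
    u.length ≤ LCS x y :=
  le_csSup (bddAbove_length_common_sublist x y) ⟨u, hx, hy, rfl⟩

theorem exists_sublist_length_eq_LCS (x y : List α) :
    ∃ u : List α, u.Sublist x ∧ u.Sublist y ∧ u.length = LCS x y :=
  Nat.sSup_mem (s := {n | ∃ u : List α, u.Sublist x ∧ u.Sublist y ∧ u.length = n})
    ⟨0, [], by simp, by simp, rfl⟩ (bddAbove_length_common_sublist x y)

theorem LCS_comm (x y : List α) : LCS x y = LCS y x := by
  simp only [LCS, and_left_comm]

theorem LCS_le_length_left (x y : List α) : LCS x y ≤ x.length := by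
  obtain ⟨u, hx, -, hu⟩ := exists_sublist_length_eq_LCS x y
  exact hu ▸ hx.length_le

theorem LCS_le_length_right (x y : List α) : LCS x y ≤ y.length :=
  LCS_comm x y ▸ LCS_le_length_left y x

theorem LCS_mono_right (x : List α) {y y' : List α} (h : y.Sublist y') : LCS x y ≤ LCS x y' := by
  obtain ⟨u, hx, hy, hu⟩ := exists_sublist_length_eq_LCS x y
  exact hu ▸ length_le_LCS hx (hy.trans h)

theorem LCS_append_left_le (x z y : List α) : LCS (x ++ z) y ≤ LCS x y + z.length := by
  obtain ⟨u, hxz, hy, hu⟩ := exists_sublist_length_eq_LCS (x ++ z) y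
  obtain ⟨u₁, u₂, rfl, hx, hz⟩ := List.sublist_append_iff.1 hxz
  rw [← hu, List.length_append]
  exact add_le_add (length_le_LCS hx ((List.sublist_append_left u₁ u₂).trans hy)) hz.length_le

theorem LCS_append_right_le (x y z : List α) : LCS x (y ++ z) ≤ LCS x y + z.length := by
  rw [LCS_comm x, LCS_comm x]
  exact LCS_append_left_le y z x

theorem exists_eq_append_LCS_append_le (x z y : List α) :
    ∃ y₁ y₂, y = y₁ ++ y₂ ∧ LCS (x ++ z) y ≤ LCS x y₁ + LCS z y₂ := by
  obtain ⟨u, hxz, hy, hu⟩ := exists_sublist_length_eq_LCS (x ++ z) y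
  obtain ⟨u₁, u₂, rfl, hx, hz⟩ := List.sublist_append_iff.1 hxz
  obtain ⟨y₁, y₂, rfl, hy₁, hy₂⟩ := List.append_sublist_iff.1 hy
  refine ⟨y₁, y₂, rfl, ?_⟩
  rw [← hu, List.length_append]
  exact add_le_add (length_le_LCS hx hy₁) (length_le_LCS hz hy₂)

theorem exists_LCS_append_le_take_drop (x z y : List α) {g : ℕ} (hg : 0 < g) :
    ∃ k ∈ range (y.length / g + 1),
      LCS (x ++ z) y ≤ LCS x (y.take (k * g)) + LCS z (y.drop (k * g)) + g := by
  obtain ⟨y₁, y₂, rfl, hle⟩ := exists_eq_append_LCS_append_le x z y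
  have hk : y₁.length / g * g ≤ y₁.length := Nat.div_mul_le_self _ _
  refine ⟨y₁.length / g, ?_, ?_⟩
  · rw [mem_range, Nat.lt_succ_iff]
    exact Nat.div_le_div_right (by simp)
  rw [List.take_append_of_le_length hk, List.drop_append_of_le_length hk]
  set t := y₁.length / g * g
  have hdrop : (y₁.drop t).length ≤ g := by
    rw [List.length_drop, Nat.sub_le_iff_le_add']
    exact (Nat.lt_div_mul_add hg).le
  have hleft : LCS x y₁ ≤ LCS x (y₁.take t) + (y₁.drop t).length := by
    simpa only [List.take_append_drop] using LCS_append_right_le x (y₁.take t) (y₁.drop t)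
  have hright : LCS z y₂ ≤ LCS z (y₁.drop t ++ y₂) :=
    LCS_mono_right z (List.sublist_append_right _ _)
  lia

theorem length_le_count_of_sublist_replicate [DecidableEq α] {a : α} {r : ℕ} {u l : List α}
    (hr : u.Sublist (List.replicate r a)) (hl : u.Sublist l) : u.length ≤ l.count a := by
  obtain ⟨n, -, rfl⟩ := List.sublist_replicate_iff.1 hr
  simpa using hl.count_le a

end LCS

section BlockAverage

/-- The average of `v` over the window `[w * j, w * (j + 1))` that contains `i`. The windows of
length `w * d` are unions of windows of length `w`, so the averages at geometrically growing
scales form a martingale. -/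
noncomputable def blockAvg (v : ℕ → ℝ) (w i : ℕ) : ℝ :=
  (∑ j ∈ range w, v (w * (i / w) + j)) / w

/-- How much the averages of `v` around `i` at the scales `w` and `W` differ. -/
noncomputable def scaleGap (v : ℕ → ℝ) (w W i : ℕ) : ℝ :=
  |blockAvg v w i - blockAvg v W i|

theorem blockAvg_congr (v : ℕ → ℝ) {w i j : ℕ} (h : i / w = j / w) :
    blockAvg v w i = blockAvg v w j := by
  rw [blockAvg, blockAvg, h]

theorem scaleGap_nonneg (v : ℕ → ℝ) (w W i : ℕ) : 0 ≤ scaleGap v w W i :=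
  abs_nonneg _

theorem sum_blockAvg_mul (v : ℕ → ℝ) {f : ℕ → ℝ} {w L : ℕ} (hw : 0 < w) (hL : w ∣ L)
    (hf : ∀ i j, i / w = j / w → f i = f j) :
    ∑ i ∈ range L, blockAvg v w i * f i = ∑ i ∈ range L, v i * f i := by
  obtain ⟨K, rfl⟩ := hL
  induction K with
  | zero => simp
  | succ K ih =>
    have hdiv : ∀ j ∈ range w, (w * K + j) / w = w * K / w := fun j hj => by
      rw [Nat.mul_add_div hw, Nat.div_eq_of_lt (mem_range.1 hj), Nat.mul_div_cancel_left _ hw,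
        add_zero]
    rw [Nat.mul_succ, sum_range_add, sum_range_add, ih]
    congr 1
    calc ∑ j ∈ range w, blockAvg v w (w * K + j) * f (w * K + j)
        = ∑ _j ∈ range w, blockAvg v w (w * K) * f (w * K) :=
          sum_congr rfl fun j hj => by
            rw [blockAvg_congr v (hdiv j hj), hf _ _ (hdiv j hj)]
      _ = (∑ j ∈ range w, v (w * K + j)) * f (w * K) := by
          have : (w : ℝ) ≠ 0 := by positivity
          rw [sum_const, card_range, nsmul_eq_mul, blockAvg, Nat.mul_div_cancel_left _ hw]
          field_simp
      _ = ∑ j ∈ range w, v (w * K + j) * f (w * K + j) := by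
          rw [sum_mul]
          exact sum_congr rfl fun j hj => by rw [hf _ _ (hdiv j hj)]

theorem sum_sq_blockAvg_sub (v : ℕ → ℝ) {w d L : ℕ} (hw : 0 < w) (hd : 0 < d) (hL : w * d ∣ L) :
    ∑ i ∈ range L, (blockAvg v w i - blockAvg v (w * d) i) ^ 2
      = ∑ i ∈ range L, blockAvg v w i ^ 2 - ∑ i ∈ range L, blockAvg v (w * d) i ^ 2 := by
  have hfine : ∑ i ∈ range L, blockAvg v w i * blockAvg v (w * d) i
      = ∑ i ∈ range L, v i * blockAvg v (w * d) i :=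
    sum_blockAvg_mul v hw (dvd_of_mul_right_dvd hL) fun i j h => blockAvg_congr v <| by
      rw [← Nat.div_div_eq_div_mul, ← Nat.div_div_eq_div_mul, h]
  have hcoarse : ∑ i ∈ range L, blockAvg v (w * d) i * blockAvg v (w * d) i
      = ∑ i ∈ range L, v i * blockAvg v (w * d) i :=
    sum_blockAvg_mul v (Nat.mul_pos hw hd) hL fun _ _ h => blockAvg_congr v h
  calc ∑ i ∈ range L, (blockAvg v w i - blockAvg v (w * d) i) ^ 2
      = ∑ i ∈ range L, (blockAvg v w i ^ 2 - 2 * (blockAvg v w i * blockAvg v (w * d) i)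
          + blockAvg v (w * d) i * blockAvg v (w * d) i) := sum_congr rfl fun i _ => by ring
    _ = ∑ i ∈ range L, blockAvg v w i ^ 2
          - ∑ i ∈ range L, blockAvg v (w * d) i * blockAvg v (w * d) i := by
        rw [sum_add_distrib, sum_sub_distrib, ← mul_sum, hfine, hcoarse]
        ring
    _ = _ := by simp only [pow_two]

variable {v : ℕ → ℝ} {M : ℝ}

theorem abs_blockAvg_le (hv : ∀ i, |v i| ≤ M) (w i : ℕ) : |blockAvg v w i| ≤ M := by
  have hM : 0 ≤ M := (abs_nonneg _).trans (hv 0)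
  rw [blockAvg, abs_div, Nat.abs_cast]
  refine div_le_of_le_mul₀ (by positivity) hM ((abs_sum_le_sum_abs _ _).trans ?_)
  simpa [mul_comm] using sum_le_sum fun j (_ : j ∈ range w) => hv (w * (i / w) + j)

/-- The increments telescope by Pythagoras, so their total is at most the energy of the finest
scale. -/
theorem sum_sum_sq_blockAvg_pow_sub_le (hv : ∀ i, |v i| ≤ M) {d q L : ℕ} (hd : 0 < d)
    (hL : d ^ q ∣ L) :
    ∑ a ∈ range q, ∑ i ∈ range L, (blockAvg v (d ^ a) i - blockAvg v (d ^ (a + 1)) i) ^ 2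
      ≤ L * M ^ 2 := by
  have hincrement : ∀ a ∈ range q,
      ∑ i ∈ range L, (blockAvg v (d ^ a) i - blockAvg v (d ^ (a + 1)) i) ^ 2
        = ∑ i ∈ range L, blockAvg v (d ^ a) i ^ 2
          - ∑ i ∈ range L, blockAvg v (d ^ (a + 1)) i ^ 2 := fun a ha => by
    have hdvd : d ^ a * d ∣ L := pow_succ d a ▸ (pow_dvd_pow d (mem_range.1 ha)).trans hL
    rw [pow_succ, sum_sq_blockAvg_sub v (by positivity) hd hdvd]
  have hlast : 0 ≤ ∑ i ∈ range L, blockAvg v (d ^ q) i ^ 2 := sum_nonneg fun _ _ => sq_nonneg _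
  have hfirst : ∑ i ∈ range L, blockAvg v (d ^ 0) i ^ 2 ≤ L * M ^ 2 := by
    refine (sum_le_card_nsmul _ _ (M ^ 2) fun i _ => ?_).trans_eq (by simp)
    exact sq_le_sq.2 ((abs_blockAvg_le hv (d ^ 0) i).trans (le_abs_self M))
  rw [sum_congr rfl hincrement, sum_range_sub']
  linarith

theorem abs_sum_range_sub_blockAvg_le (hv : ∀ i, |v i| ≤ M) {w : ℕ} (hw : 0 < w) (n : ℕ) :
    |∑ i ∈ range n, (v i - blockAvg v w i)| ≤ 2 * M * w := by
  have hM : 0 ≤ M := (abs_nonneg _).trans (hv 0)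
  have hfull : ∑ i ∈ range (w * (n / w)), (v i - blockAvg v w i) = 0 := by
    have := sum_blockAvg_mul v (f := fun _ => 1) hw (dvd_mul_right w (n / w)) fun _ _ _ => rfl
    simp only [mul_one] at this
    rw [sum_sub_distrib, this, sub_self]
  have hterm : ∀ i, |v i - blockAvg v w i| ≤ 2 * M := fun i =>
    (abs_sub _ _).trans (by linarith [hv i, abs_blockAvg_le hv w i])
  have hrest : ((n % w : ℕ) : ℝ) ≤ w := by exact_mod_cast (Nat.mod_lt n hw).le
  rw [← Nat.div_add_mod n w, sum_range_add, hfull, zero_add]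
  calc |∑ i ∈ range (n % w), (v (w * (n / w) + i) - blockAvg v w (w * (n / w) + i))|
      ≤ ∑ _i ∈ range (n % w), 2 * M :=
        (abs_sum_le_sum_abs _ _).trans (sum_le_sum fun i _ => hterm _)
    _ = 2 * M * (n % w : ℕ) := by rw [sum_const, card_range, nsmul_eq_mul, mul_comm]
    _ ≤ 2 * M * w := by gcongr

theorem abs_sum_Ico_sub_blockAvg_le (hv : ∀ i, |v i| ≤ M) {w a b : ℕ} (hw : 0 < w) (hab : a ≤ b) :
    |∑ i ∈ Ico a b, (v i - blockAvg v w i)| ≤ 4 * M * w := by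
  rw [sum_Ico_eq_sub _ hab]
  refine (abs_sub _ _).trans ?_
  linarith [abs_sum_range_sub_blockAvg_le hv hw a, abs_sum_range_sub_blockAvg_le hv hw b]

theorem abs_sum_Ico_sub_mul_le (hv : ∀ i, |v i| ≤ M) {w W a b : ℕ} {μ : ℝ} (hw : 0 < w)
    (hab : a ≤ b) (hμ : ∀ i ∈ Ico a b, blockAvg v W i = μ) :
    |∑ i ∈ Ico a b, v i - μ * ((b : ℝ) - a)| ≤ 4 * M * w + ∑ i ∈ Ico a b, scaleGap v w W i := by
  have hcoarse : ∑ i ∈ Ico a b, blockAvg v W i = μ * ((b : ℝ) - a) := by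
    rw [sum_congr rfl hμ, sum_const, Nat.card_Ico, nsmul_eq_mul, Nat.cast_sub hab, mul_comm]
  calc |∑ i ∈ Ico a b, v i - μ * ((b : ℝ) - a)|
      = |∑ i ∈ Ico a b, (v i - blockAvg v w i)
          + ∑ i ∈ Ico a b, (blockAvg v w i - blockAvg v W i)| := by
        rw [← hcoarse, ← sum_sub_distrib, ← sum_add_distrib]
        simp only [sub_add_sub_cancel]
    _ ≤ 4 * M * w + ∑ i ∈ Ico a b, scaleGap v w W i :=
        (abs_add_le _ _).trans
          (add_le_add (abs_sum_Ico_sub_blockAvg_le hv hw hab) (abs_sum_le_sum_abs _ _))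

end BlockAverage

section BukhMa

/-- The letters of `y` as signs, `false ↦ 1` and `true ↦ -1`, extended by `0` beyond the end of
`y`, so that averages over windows of `y` measure its local imbalance of letters. -/
def letterSign (y : List Bool) (i : ℕ) : ℝ :=
  match y[i]? with
  | some false => 1
  | some true => -1
  | none => 0

theorem abs_letterSign_le_one (y : List Bool) (i : ℕ) : |letterSign y i| ≤ 1 := by
  unfold letterSign
  split <;> simp

theorem sum_letterSign_infix (pre l post : List Bool) :
    ∑ i ∈ Ico pre.length (pre.length + l.length), letterSign (pre ++ l ++ post) i
      = l.count false - l.count true := by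
  induction l generalizing pre with
  | nil => simp
  | cons b l ih =>
    have hhead : letterSign (pre ++ b :: l ++ post) pre.length = if b then -1 else 1 := by
      cases b <;> simp [letterSign]
    have htail := ih (pre ++ [b])
    simp only [List.append_assoc, List.cons_append, List.nil_append, List.length_append,
      List.length_nil, List.length_cons, zero_add, add_right_comm _ 1, ← add_assoc] at htail hhead ⊢
    rw [sum_eq_sum_Ico_succ_bot (by lia), hhead, htail]
    cases b <;> simp <;> ring

theorem two_mul_count_false (pre l post : List Bool) :
    2 * (l.count false : ℝ) = l.length
      + ∑ i ∈ Ico pre.length (pre.length + l.length), letterSign (pre ++ l ++ post) i := by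
  rw [sum_letterSign_infix, ← List.count_false_add_count_true l]
  push_cast
  ring

theorem two_mul_count_true (pre l post : List Bool) :
    2 * (l.count true : ℝ) = l.length
      - ∑ i ∈ Ico pre.length (pre.length + l.length), letterSign (pre ++ l ++ post) i := by
  rw [sum_letterSign_infix, ← List.count_false_add_count_true l]
  push_cast
  ring

theorem three_mul_le_of_le_mul_add {A r t d p θ : ℝ} (ht : 0 ≤ t) (hd : 0 ≤ d) (hθ : 0 ≤ θ)
    (hθ3 : θ ≤ 3) (hθp : θ * p ≤ 1) (hr : A ≤ r) (hA : A ≤ p * t + d) :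
    3 * A ≤ (3 - θ) * r + t + 3 * d := by
  calc 3 * A = (3 - θ) * A + θ * A := by ring
    _ ≤ (3 - θ) * r + θ * (p * t + d) :=
        add_le_add (mul_le_mul_of_nonneg_left hr (by linarith)) (mul_le_mul_of_nonneg_left hA hθ)
    _ = (3 - θ) * r + θ * p * t + θ * d := by ring
    _ ≤ (3 - θ) * r + 1 * t + 3 * d := by gcongr
    _ = (3 - θ) * r + t + 3 * d := by ring

/-- For `p` near `1 / 2` the multipliers are the tangent `4 * (1 - p)` of `1 / p` at `1 / 2` and
its mirror image; elsewhere they are clipped to `[1, 3]`. -/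
theorem exists_multipliers {p : ℝ} (hp0 : 0 ≤ p) (hp1 : p ≤ 1) :
    ∃ θ ∈ Set.Icc (0 : ℝ) 3, ∃ θ' ∈ Set.Icc (0 : ℝ) 3,
      θ + θ' = 4 ∧ θ * p ≤ 1 ∧ θ' * (1 - p) ≤ 1 := by
  rcases le_total p (1 / 4) with hlow | hlow
  · exact ⟨3, by simp, 1, by simp, by norm_num, by linarith, by linarith⟩
  rcases le_total (3 / 4) p with hhigh | hhigh
  · exact ⟨1, by simp, 3, by simp, by norm_num, by linarith, by linarith⟩
  · exact ⟨4 * (1 - p), ⟨by linarith, by linarith⟩, 4 * p, ⟨by linarith, by linarith⟩, by ring,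
      by linarith [sq_nonneg (2 * p - 1)], by linarith [sq_nonneg (2 * p - 1)]⟩

theorem three_mul_add_le_of_complementary_densities {A B r t t' d d' p : ℝ} (ht : 0 ≤ t)
    (ht' : 0 ≤ t') (hd : 0 ≤ d) (hd' : 0 ≤ d') (hp0 : 0 ≤ p) (hp1 : p ≤ 1)
    (hAr : A ≤ r) (hBr : B ≤ r) (hA : A ≤ p * t + d) (hB : B ≤ (1 - p) * t' + d') :
    3 * (A + B) ≤ 2 * r + (t + t') + 3 * (d + d') := by
  obtain ⟨θ, hθ, θ', hθ', hsum, hθp, hθp'⟩ := exists_multipliers hp0 hp1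
  have hfirst := three_mul_le_of_le_mul_add ht hd hθ.1 hθ.2 hθp hAr hA
  have hsecond := three_mul_le_of_le_mul_add ht' hd' hθ'.1 hθ'.2 hθp' hBr hB
  have hr : (θ + θ') * r = 4 * r := by rw [hsum]
  linarith

/-- The Bukh–Ma word `(0ʳ 1ʳ)ᵏ`, the basic word of the block code: words with very different run
lengths `r` cannot both be matched well by the same word. -/
def bukhMaWord (r k : ℕ) : List Bool :=
  (List.replicate k (List.replicate r false ++ List.replicate r true)).flatten

theorem length_bukhMaWord (r k : ℕ) : (bukhMaWord r k).length = 2 * r * k := by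
  simp only [bukhMaWord, List.length_flatten, List.map_replicate, List.length_append,
    List.length_replicate, List.sum_replicate, smul_eq_mul]
  ring

theorem bukhMaWord_succ (r k : ℕ) :
    bukhMaWord r (k + 1)
      = List.replicate r false ++ List.replicate r true ++ bukhMaWord r k := by
  rw [bukhMaWord, List.replicate_succ, List.flatten_cons, bukhMaWord]

/-- A pair of runs matched inside one window of length `W`: there the letters of `y` have nearly
constant densities `p` and `1 - p`. -/
theorem three_mul_add_le_of_div_eq {y pre l₁ l₂ post : List Bool} {A B r w W : ℕ} (hw : 0 < w)
    (hy : y = pre ++ l₁ ++ l₂ ++ post) (hAr : A ≤ r) (hA : A ≤ l₁.count false)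
    (hBr : B ≤ r) (hB : B ≤ l₂.count true)
    (hW : pre.length / W = (pre.length + l₁.length + l₂.length) / W) :
    3 * ((A : ℝ) + B) ≤ 2 * r + (l₁.length + l₂.length) + 12 * w
      + 3 / 2 * ∑ i ∈ Ico pre.length (pre.length + l₁.length + l₂.length),
          scaleGap (letterSign y) w W i := by
  set v := letterSign y
  have hcount₁ := two_mul_count_false pre l₁ (l₂ ++ post)
  have hcount₂ := two_mul_count_true (pre ++ l₁) l₂ post
  rw [← List.append_assoc, ← hy] at hcount₁
  rw [← hy, List.length_append] at hcount₂
  set a := pre.length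
  set b := a + l₁.length with hb
  set c := b + l₂.length with hc
  have hab : a ≤ b := by lia
  have hbc : b ≤ c := by lia
  have hv1 : ∀ i, |v i| ≤ 1 := abs_letterSign_le_one y
  set μ := blockAvg v W a
  obtain ⟨hμ_ge, hμ_le⟩ := abs_le.1 (abs_blockAvg_le hv1 W a)
  have hconst : ∀ i, a ≤ i → i < c → blockAvg v W i = μ := fun i hai hic =>
    blockAvg_congr v <| le_antisymm (hW ▸ Nat.div_le_div_right hic.le) (Nat.div_le_div_right hai)
  have hdev₁ := (abs_le.1 (abs_sum_Ico_sub_mul_le hv1 hw hab fun i hi =>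
    hconst i (mem_Ico.1 hi).1 ((mem_Ico.1 hi).2.trans_le hbc))).2
  have hdev₂ := (abs_le.1 (abs_sum_Ico_sub_mul_le hv1 hw hbc fun i hi =>
    hconst i (hab.trans (mem_Ico.1 hi).1) (mem_Ico.1 hi).2)).1
  have hgap : ∀ x z, 0 ≤ ∑ i ∈ Ico x z, scaleGap v w W i := fun x z =>
    sum_nonneg fun i _ => scaleGap_nonneg v w W i
  have hgap₁ := hgap a b
  have hgap₂ := hgap b c
  rw [← sum_Ico_consecutive _ hab hbc]
  have hbR : (b : ℝ) - a = l₁.length := by rw [hb]; push_cast; ring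
  have hcR : (c : ℝ) - b = l₂.length := by rw [hc]; push_cast; ring
  have hAR : (A : ℝ) ≤ l₁.count false := by exact_mod_cast hA
  have hBR : (B : ℝ) ≤ l₂.count true := by exact_mod_cast hB
  rw [hbR] at hdev₁
  rw [hcR] at hdev₂
  have := three_mul_add_le_of_complementary_densities (p := (1 + μ) / 2)
    (d := (4 * w + ∑ i ∈ Ico a b, scaleGap v w W i) / 2)
    (d' := (4 * w + ∑ i ∈ Ico b c, scaleGap v w W i) / 2)
    (Nat.cast_nonneg l₁.length) (Nat.cast_nonneg l₂.length) (by positivity) (by positivity)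
    (by linarith) (by linarith) (Nat.cast_le.2 hAr) (Nat.cast_le.2 hBr) (by linarith)
    (by linarith)
  linarith

/-- The last term pays for the pairs of runs that cross a boundary between windows of length `W`. -/
theorem three_mul_add_le {y pre l₁ l₂ post : List Bool} {A B r w : ℕ} (W : ℕ) (hw : 0 < w)
    (hy : y = pre ++ l₁ ++ l₂ ++ post) (hAr : A ≤ r) (hA : A ≤ l₁.count false)
    (hBr : B ≤ r) (hB : B ≤ l₂.count true) :
    3 * ((A : ℝ) + B) ≤ 2 * r + (l₁.length + l₂.length) + 12 * w
      + 3 / 2 * ∑ i ∈ Ico pre.length (pre.length + l₁.length + l₂.length),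
          scaleGap (letterSign y) w W i
      + 4 * r * (((pre.length + l₁.length + l₂.length) / W : ℕ) - (pre.length / W : ℕ)) := by
  have hmono : pre.length / W ≤ (pre.length + l₁.length + l₂.length) / W :=
    Nat.div_le_div_right (by lia)
  rcases hmono.lt_or_eq with hcross | hsame
  · have hcross : (1 : ℝ) ≤ ((pre.length + l₁.length + l₂.length) / W : ℕ)
        - (pre.length / W : ℕ) := by
      rw [le_sub_iff_add_le']
      exact_mod_cast hcross
    have hAr' : (A : ℝ) ≤ r := Nat.cast_le.2 hAr
    have hBr' : (B : ℝ) ≤ r := Nat.cast_le.2 hBr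
    have hgap : 0 ≤ ∑ i ∈ Ico pre.length (pre.length + l₁.length + l₂.length),
        scaleGap (letterSign y) w W i := sum_nonneg fun i _ => scaleGap_nonneg _ w W i
    have hlast := mul_le_mul_of_nonneg_left hcross (by positivity : (0 : ℝ) ≤ 4 * r)
    linarith [(l₁.length.cast_nonneg : (0 : ℝ) ≤ _), (l₂.length.cast_nonneg : (0 : ℝ) ≤ _),
      (w.cast_nonneg : (0 : ℝ) ≤ _)]
  · rw [hsame, sub_self, mul_zero, add_zero]
    exact three_mul_add_le_of_div_eq hw hy hAr hA hBr hB hsame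

theorem three_mul_length_le_of_sublist_bukhMaWord {w : ℕ} (r W k : ℕ) (hw : 0 < w) (y : List Bool)
    {pre l u : List Bool} (hy : y = pre ++ l) (hu : u.Sublist (bukhMaWord r k))
    (hl : u.Sublist l) :
    3 * (u.length : ℝ) ≤ 2 * r * k + l.length + 12 * w * k
      + 3 / 2 * ∑ i ∈ Ico pre.length y.length, scaleGap (letterSign y) w W i
      + 4 * r * ((y.length / W : ℕ) - (pre.length / W : ℕ)) := by
  induction k generalizing pre l u with
  | zero =>
    obtain rfl : u = [] := by simpa [bukhMaWord] using hu
    have hgap : 0 ≤ ∑ i ∈ Ico pre.length y.length, scaleGap (letterSign y) w W i :=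
      sum_nonneg fun i _ => scaleGap_nonneg _ w W i
    have hdiv : ((pre.length / W : ℕ) : ℝ) ≤ (y.length / W : ℕ) :=
      Nat.cast_le.2 (Nat.div_le_div_right (by simp [hy]))
    have hlast : (0 : ℝ) ≤ 4 * r * ((y.length / W : ℕ) - (pre.length / W : ℕ)) :=
      mul_nonneg (by positivity) (sub_nonneg.2 hdiv)
    simp only [List.length_nil, Nat.cast_zero, mul_zero]
    linarith [(l.length.cast_nonneg : (0 : ℝ) ≤ _)]
  | succ k ih =>
    rw [bukhMaWord_succ] at hu
    obtain ⟨u', u₃, rfl, hu', hu₃⟩ := List.sublist_append_iff.1 hu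
    obtain ⟨u₁, u₂, rfl, hu₁, hu₂⟩ := List.sublist_append_iff.1 hu'
    obtain ⟨l', l₃, rfl, hl', hl₃⟩ := List.append_sublist_iff.1 hl
    obtain ⟨l₁, l₂, rfl, hl₁, hl₂⟩ := List.append_sublist_iff.1 hl'
    have hpair := three_mul_add_le (y := y) (pre := pre) (post := l₃) W hw (by simp [hy])
      (by simpa using hu₁.length_le) (length_le_count_of_sublist_replicate hu₁ hl₁)
      (by simpa using hu₂.length_le) (length_le_count_of_sublist_replicate hu₂ hl₂)
    have hrest := ih (pre := pre ++ l₁ ++ l₂) (by simp [hy]) hu₃ hl₃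
    rw [List.length_append, List.length_append] at hrest
    rw [← sum_Ico_consecutive _ (by lia : pre.length ≤ pre.length + l₁.length + l₂.length)
      (by simp only [hy, List.length_append]; lia)]
    simp only [List.length_append, Nat.cast_add, Nat.cast_one]
    linarith

theorem three_mul_LCS_bukhMaWord_le {w : ℕ} (r W k : ℕ) (hw : 0 < w) (y : List Bool) :
    3 * (LCS (bukhMaWord r k) y : ℝ) ≤ 2 * r * k + y.length + 12 * w * k
      + 3 / 2 * ∑ i ∈ range y.length, scaleGap (letterSign y) w W i
      + 4 * r * (y.length / W : ℕ) := by
  obtain ⟨u, hu, hy, hlen⟩ := exists_sublist_length_eq_LCS (bukhMaWord r k) y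
  simpa [← hlen] using three_mul_length_le_of_sublist_bukhMaWord (pre := []) r W k hw y rfl hu hy

end BukhMa

section BlockCode

/-- The indices `a` whose word `B a` matches `y` with surplus at least `t`. If `D` deletions and
`I` insertions lead from `x` to `y`, then `2 * |x| + |y| ≤ 3 * LCS x y + 2 * D + I`, so for
`|x| = n` and `I + 2 * D ≤ n - t` the surplus is at least `t`. -/
noncomputable def wellMatched [Fintype ι] (B : ι → List α) (t : ℕ) (y : List α) : Finset ι :=
  {a | (B a).length + y.length + t ≤ 3 * LCS (B a) y}

theorem mem_wellMatched [Fintype ι] {B : ι → List α} {t : ℕ} {y : List α} {a : ι} :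
    a ∈ wellMatched B t y ↔ (B a).length + y.length + t ≤ 3 * LCS (B a) y := by
  rw [wellMatched, mem_filter_univ]

theorem wellMatched_eq_empty [Fintype ι] {B : ι → List α} {m t : ℕ} {y : List α}
    (hB : ∀ a, (B a).length = m) (hy : 2 * m < y.length) : wellMatched B t y = ∅ := by
  refine eq_empty_of_forall_notMem fun a ha => ?_
  have hLCS := LCS_le_length_left (B a) y
  rw [mem_wellMatched, hB] at ha
  rw [hB] at hLCS
  lia

/-- AM–GM with weight `6 * h`. -/
theorem sum_scaleGap_le (v : ℕ → ℝ) (w W L : ℕ) {h : ℝ} (hh : 0 < h) :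
    ∑ i ∈ range L, scaleGap v w W i
      ≤ L / (12 * h) + 3 * h * ∑ i ∈ range L, (blockAvg v w i - blockAvg v W i) ^ 2 := by
  have hterm : ∀ i ∈ range L,
      scaleGap v w W i ≤ 1 / (12 * h) + 3 * h * (blockAvg v w i - blockAvg v W i) ^ 2 :=
    fun i _ => by
      have hsq : 0 ≤ 3 * h * (scaleGap v w W i - 1 / (6 * h)) ^ 2 := by positivity
      have hexpand : 3 * h * (scaleGap v w W i - 1 / (6 * h)) ^ 2
          = 1 / (12 * h) + 3 * h * (blockAvg v w i - blockAvg v W i) ^ 2 - scaleGap v w W i := by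
        rw [scaleGap, ← sq_abs (blockAvg v w i - blockAvg v W i)]
        field_simp
        ring
      linarith
  refine (sum_le_sum hterm).trans_eq ?_
  rw [sum_add_distrib, sum_const, card_range, nsmul_eq_mul, mul_sum]
  ring

/-- With runs `c = 56 * h` times longer than the short windows and `c` times shorter than the long
ones, the three error terms of `three_mul_LCS_bukhMaWord_le` take up `3 / 28`, `1 / 4` and `1 / 7`
of the surplus `τ`, apart from the increment between the two scales. -/
theorem le_sum_sq_blockAvg_sub_of_surplus {h w k K τ : ℕ} (hh : 0 < h) (hw : 0 < w)
    (hm : 2 * (w * (56 * h)) * k = h * τ) (hK : 2 * (h * τ) = w * (56 * h) ^ 2 * K)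
    {y : List Bool} (hy : y.length ≤ 2 * (h * τ))
    (hsurplus : h * τ + y.length + τ ≤ 3 * LCS (bukhMaWord (w * (56 * h)) k) y) :
    (τ : ℝ) ≤ 9 * h * ∑ i ∈ range (2 * (h * τ)), (blockAvg (letterSign y) w i
      - blockAvg (letterSign y) (w * (56 * h) ^ 2) i) ^ 2 := by
  set W := w * (56 * h) ^ 2
  have hhR : (0 : ℝ) < h := Nat.cast_pos.2 hh
  have hmR : 2 * ((w * (56 * h) : ℕ) : ℝ) * k = h * τ := by exact_mod_cast hm
  have hupper := three_mul_LCS_bukhMaWord_le (w * (56 * h)) W k hw y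
  have hlower : (h * τ + y.length + τ : ℝ)
      ≤ 3 * (LCS (bukhMaWord (w * (56 * h)) k) y : ℝ) := by exact_mod_cast hsurplus
  have hshort : 12 * (w : ℝ) * k = 3 / 28 * τ := by
    refine mul_left_cancel₀ hhR.ne' ?_
    push_cast at hmR
    linarith
  have hcross : 4 * ((w * (56 * h) : ℕ) : ℝ) * (y.length / W : ℕ) ≤ 1 / 7 * τ := by
    have hwindows : ((y.length / W : ℕ) : ℝ) ≤ K :=
      Nat.cast_le.2 (Nat.div_le_of_le_mul (hK ▸ hy))
    have hKR : 2 * (h * τ : ℝ) = w * (56 * h) ^ 2 * K := by exact_mod_cast hK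
    calc 4 * ((w * (56 * h) : ℕ) : ℝ) * (y.length / W : ℕ)
        ≤ 4 * ((w * (56 * h) : ℕ) : ℝ) * K := by gcongr
      _ = 1 / 7 * τ := by
        refine mul_left_cancel₀ hhR.ne' ?_
        push_cast
        linarith
  have hgap : ∑ i ∈ range y.length, scaleGap (letterSign y) w W i
      ≤ τ / 6 + 3 * h * ∑ i ∈ range (2 * (h * τ)),
          (blockAvg (letterSign y) w i - blockAvg (letterSign y) W i) ^ 2 := by
    refine (sum_le_sum_of_subset_of_nonneg (range_mono hy) fun i _ _ =>
      scaleGap_nonneg _ w W i).trans ((sum_scaleGap_le _ w W _ hhR).trans_eq ?_)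
    push_cast
    field_simp
    ring
  linarith

/-- The block code on `q` letters, at scale `d = (56 * h) ^ 2`: the run lengths of consecutive
codewords differ by a factor `d`, and all words have length `h * (e * (2 * d ^ q))`. -/
def blockCode (h e q : ℕ) (a : Fin q) : List Bool :=
  bukhMaWord (((56 * h) ^ 2) ^ (a : ℕ) * (56 * h))
    (h * e * (56 * h) * ((56 * h) ^ 2) ^ (q - 1 - a))

theorem pow_mul_pow_sub_one_sub {q : ℕ} (d : ℕ) (a : Fin q) :
    d ^ (a : ℕ) * d * d ^ (q - 1 - a) = d ^ q := by
  rw [← pow_succ, ← pow_add]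
  congr 1
  lia

theorem length_blockCode (h e q : ℕ) (a : Fin q) :
    (blockCode h e q a).length = h * (e * (2 * ((56 * h) ^ 2) ^ q)) := by
  rw [blockCode, length_bukhMaWord, ← pow_mul_pow_sub_one_sub _ a]
  ring

theorem card_wellMatched_blockCode_le (h e q : ℕ) (hh : 0 < h) (he : 0 < e) (y : List Bool) :
    #(wellMatched (blockCode h e q) (e * (2 * ((56 * h) ^ 2) ^ q)) y) ≤ 18 * h ^ 2 := by
  have hlength := length_blockCode h e q
  set d := (56 * h) ^ 2 with hd
  set τ := e * (2 * d ^ q) with hτ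
  rcases lt_or_ge (2 * (h * τ)) y.length with hlong | hy
  · rw [wellMatched_eq_empty hlength hlong, card_empty]
    exact zero_le
  set v := letterSign y
  set Δ : ℕ → ℝ := fun a =>
    ∑ i ∈ range (2 * (h * τ)), (blockAvg v (d ^ a) i - blockAvg v (d ^ (a + 1)) i) ^ 2
  have hτ0 : (0 : ℝ) < τ := by positivity
  have henergy : ∑ a : Fin q, Δ a ≤ 2 * (h * τ) := by
    have hdvd : d ^ q ∣ 2 * (h * τ) := ⟨h * e * 4, by rw [hτ]; ring⟩
    rw [Fin.sum_univ_eq_sum_range]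
    simpa using sum_sum_sq_blockAvg_pow_sub_le (abs_letterSign_le_one y)
      (by positivity : 0 < d) hdvd
  have hincrement : ∀ a ∈ wellMatched (blockCode h e q) τ y, (τ : ℝ) ≤ 9 * h * Δ a :=
    fun a ha => by
      have hq := pow_mul_pow_sub_one_sub d a
      rw [mem_wellMatched, hlength, blockCode] at ha
      simp only [Δ, pow_succ d]
      refine le_sum_sq_blockAvg_sub_of_surplus (K := 4 * h * e * d ^ (q - 1 - a)) hh
        (by positivity) ?_ ?_ hy ha
      · rw [hτ, ← hq, hd]
        ring
      · rw [hτ, ← hq, hd]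
        ring
  have hcard : (#(wellMatched (blockCode h e q) τ y) : ℝ) * τ ≤ 18 * h ^ 2 * τ := by
    calc (#(wellMatched (blockCode h e q) τ y) : ℝ) * τ
        ≤ ∑ a ∈ wellMatched (blockCode h e q) τ y, 9 * h * Δ a := by
          rw [← nsmul_eq_mul]
          exact card_nsmul_le_sum _ _ _ hincrement
      _ ≤ ∑ a : Fin q, 9 * h * Δ a :=
          sum_le_sum_of_subset_of_nonneg (subset_univ _) fun a _ _ => by positivity
      _ = 9 * h * ∑ a : Fin q, Δ a := by rw [mul_sum]
      _ ≤ 9 * h * (2 * (h * τ)) := by gcongr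
      _ = 18 * h ^ 2 * τ := by ring
  exact_mod_cast le_of_mul_le_mul_right hcard hτ0

end BlockCode

section Concatenation

/-- Concatenation of the outer word `x` with the inner code `B`: every letter of `x` is replaced by
its codeword. -/
def blockEncode (B : ι → List α) {N : ℕ} (x : Fin N → ι) : List α :=
  (List.ofFn fun i => B (x i)).flatten

theorem blockEncode_cons (B : ι → List α) {N : ℕ} (a : ι) (x : Fin N → ι) :
    blockEncode B (Fin.cons a x : Fin (N + 1) → ι) = B a ++ blockEncode B x := by
  simp [blockEncode, List.ofFn_succ]

theorem length_blockEncode {B : ι → List α} {m : ℕ} (hB : ∀ a, (B a).length = m) {N : ℕ}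
    (x : Fin N → ι) : (blockEncode B x).length = m * N := by
  induction x using Fin.consInduction with
  | elim0 => simp [blockEncode]
  | cons a x ih => rw [blockEncode_cons, List.length_append, hB, ih, Nat.mul_succ, add_comm]

/-- The exponential of the surplus with which `x` matches `y`, measured in units of `g`. It is
nearly multiplicative under concatenation, which makes its moments computable. -/
noncomputable def matchWeight (g : ℕ) (x y : List α) : ℝ :=
  2 ^ ((3 * LCS x y - x.length - y.length : ℝ) / g)

theorem matchWeight_pos (g : ℕ) (x y : List α) : 0 < matchWeight g x y :=
  Real.rpow_pos_of_pos two_pos _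

theorem matchWeight_le_zpow {g : ℕ} (hg : 0 < g) {x y : List α} {j : ℤ}
    (h : 3 * (LCS x y : ℤ) ≤ x.length + y.length + j * g) : matchWeight g x y ≤ 2 ^ j := by
  have hg' : (0 : ℝ) < g := Nat.cast_pos.2 hg
  have h' : 3 * (LCS x y : ℝ) ≤ x.length + y.length + j * g := by exact_mod_cast h
  rw [matchWeight, ← Real.rpow_intCast]
  refine Real.rpow_le_rpow_of_exponent_le one_le_two ?_
  rw [div_le_iff₀ hg']
  linarith

theorem pow_le_matchWeight {g : ℕ} (hg : 0 < g) {x y : List α} {j : ℕ}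
    (h : x.length + y.length + j * g ≤ 3 * LCS x y) : 2 ^ j ≤ matchWeight g x y := by
  have hg' : (0 : ℝ) < g := Nat.cast_pos.2 hg
  have h' : (x.length + y.length + j * g : ℝ) ≤ 3 * LCS x y := by exact_mod_cast h
  rw [matchWeight, ← Real.rpow_natCast]
  refine Real.rpow_le_rpow_of_exponent_le one_le_two ?_
  rw [le_div_iff₀ hg']
  linarith

/-- Rounding the point where `y` is split down to a multiple of `g` costs a factor `2 ^ 3`. -/
theorem matchWeight_append_le {g : ℕ} (hg : 0 < g) (x z y : List α) :
    matchWeight g (x ++ z) y ≤ ∑ k ∈ range (y.length / g + 1),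
      8 * (matchWeight g x (y.take (k * g)) * matchWeight g z (y.drop (k * g))) := by
  obtain ⟨k, hk, hle⟩ := exists_LCS_append_le_take_drop x z y hg
  have hsplit : matchWeight g (x ++ z) y
      ≤ 8 * (matchWeight g x (y.take (k * g)) * matchWeight g z (y.drop (k * g))) := by
    have hlen : ((y.take (k * g)).length + (y.drop (k * g)).length : ℝ) = y.length := by
      rw [← Nat.cast_add, ← List.length_append, List.take_append_drop]
    have hle : (LCS (x ++ z) y : ℝ)
        ≤ LCS x (y.take (k * g)) + LCS z (y.drop (k * g)) + g := by exact_mod_cast hle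
    rw [show (8 : ℝ) = 2 ^ (3 : ℝ) by norm_num, matchWeight, matchWeight, matchWeight,
      ← Real.rpow_add two_pos, ← Real.rpow_add two_pos]
    refine Real.rpow_le_rpow_of_exponent_le one_le_two ?_
    have hg' : (0 : ℝ) < g := Nat.cast_pos.2 hg
    rw [← add_div, add_comm 3, div_add' _ _ _ hg'.ne', div_le_div_iff_of_pos_right hg',
      List.length_append]
    push_cast
    linarith
  refine hsplit.trans (single_le_sum (f := fun k => 8 * (matchWeight g x (y.take (k * g))
    * matchWeight g z (y.drop (k * g)))) (fun i _ => ?_) hk)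
  have := matchWeight_pos g x (y.take (i * g))
  have := matchWeight_pos g z (y.drop (i * g))
  positivity

variable [Fintype ι] {B : ι → List α} {s e g l : ℕ}

theorem sum_matchWeight_le (hg : 0 < g) (hB : ∀ a, (B a).length = s * g) {y : List α}
    (hl : #(wellMatched B (e * g) y) ≤ l) :
    ∑ a, matchWeight g (B a) y ≤ l * 2 ^ s + Fintype.card ι * 2 ^ e := by
  classical
  have hterm : ∀ a, matchWeight g (B a) y
      ≤ (if a ∈ wellMatched B (e * g) y then 2 ^ s else 0) + 2 ^ e := fun a => by
    split_ifs with ha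
    · have hx := LCS_le_length_left (B a) y
      have hy := LCS_le_length_right (B a) y
      have hs : matchWeight g (B a) y ≤ 2 ^ (s : ℤ) := matchWeight_le_zpow hg <| by
        rw [hB] at hx ⊢
        push_cast
        lia
      rw [zpow_natCast] at hs
      linarith [pow_pos (two_pos : (0 : ℝ) < 2) e]
    · rw [mem_wellMatched] at ha
      have he : matchWeight g (B a) y ≤ 2 ^ (e : ℤ) := matchWeight_le_zpow hg <| by
        exact_mod_cast (not_le.1 ha).le
      rwa [zpow_natCast, ← zero_add (2 ^ e)] at he
  calc ∑ a, matchWeight g (B a) y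
      ≤ ∑ a, ((if a ∈ wellMatched B (e * g) y then 2 ^ s else 0) + 2 ^ e) :=
        sum_le_sum fun a _ => hterm a
    _ = #(wellMatched B (e * g) y) * 2 ^ s + Fintype.card ι * 2 ^ e := by
        simp [sum_add_distrib]
    _ ≤ l * 2 ^ s + Fintype.card ι * 2 ^ e := by gcongr

theorem sum_matchWeight_le_of_length_eq (hg : 0 < g) (hB : ∀ a, (B a).length = s * g) {k : ℕ}
    {y : List α} (hy : y.length = k * g) (hk : 2 * s ≤ k) :
    ∑ a, matchWeight g (B a) y ≤ Fintype.card ι * (1 / 2) ^ (k - 2 * s) := by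
  have hterm : ∀ a ∈ univ, matchWeight g (B a) y ≤ (1 / 2) ^ (k - 2 * s) := fun a _ => by
    have hpow : matchWeight g (B a) y ≤ 2 ^ (-(k - 2 * s : ℕ) : ℤ) := by
      refine matchWeight_le_zpow hg ?_
      rw [hB, hy]
      push_cast [Nat.cast_sub hk]
      have hx : (LCS (B a) y : ℤ) ≤ s * g := by
        exact_mod_cast hB a ▸ LCS_le_length_left (B a) y
      linarith
    rwa [zpow_neg, zpow_natCast, ← inv_pow, ← one_div] at hpow
  refine (sum_le_card_nsmul _ _ _ hterm).trans_eq ?_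
  rw [card_univ, nsmul_eq_mul]

theorem sum_range_le_of_geometric_tail {f : ℕ → ℝ} {D Q : ℝ} {t T : ℕ} (hD : 0 ≤ D) (hQ : 0 ≤ Q)
    (hf : ∀ k < T, f k ≤ D) (htail : ∀ k < T, t ≤ k → f k ≤ Q * (1 / 2) ^ (k - t)) :
    ∑ k ∈ range T, f k ≤ t * D + 2 * Q := by
  rcases le_total T t with hT | hT
  · calc ∑ k ∈ range T, f k ≤ T * D := by
          simpa using sum_le_card_nsmul _ _ D fun k hk => hf k (mem_range.1 hk)
      _ ≤ t * D := by gcongr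
      _ ≤ t * D + 2 * Q := by linarith
  obtain ⟨m, rfl⟩ := Nat.exists_eq_add_of_le hT
  rw [sum_range_add]
  refine add_le_add ?_ ?_
  · simpa using sum_le_card_nsmul (range t) f D fun k hk =>
      hf k ((mem_range.1 hk).trans_le hT)
  · calc ∑ k ∈ range m, f (t + k) ≤ ∑ k ∈ range m, Q * (1 / 2) ^ k :=
          sum_le_sum fun k hk => by
            simpa using htail (t + k) (Nat.add_lt_add_left (mem_range.1 hk) t) le_self_add
      _ = Q * ∑ k ∈ range m, (1 / 2 : ℝ) ^ k := by rw [mul_sum]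
      _ ≤ Q * 2 := by gcongr; exact sum_geometric_two_le m
      _ = 2 * Q := mul_comm _ _

theorem sum_matchWeight_blockEncode_le (hg : 0 < g) {S : ℝ}
    (hS : ∀ y : List α,
      ∑ k ∈ range (y.length / g + 1), ∑ a, matchWeight g (B a) (y.take (k * g)) ≤ S)
    (N : ℕ) (y : List α) :
    ∑ x : Fin N → ι, matchWeight g (blockEncode B x) y ≤ (8 * S) ^ N := by
  have hS0 : 0 ≤ S := (sum_nonneg fun k _ => sum_nonneg fun a _ =>
    (matchWeight_pos g (B a) (([] : List α).take (k * g))).le).trans (hS [])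
  induction N generalizing y with
  | zero =>
    have hnil : matchWeight g ([] : List α) y ≤ 2 ^ (0 : ℤ) := matchWeight_le_zpow hg <| by
      have := LCS_le_length_left [] y
      rw [List.length_nil] at this
      lia
    simpa [blockEncode] using hnil
  | succ N ih =>
    rw [← (Fin.consEquiv fun _ : Fin (N + 1) => ι).sum_comp, Fintype.sum_prod_type]
    calc ∑ a, ∑ x : Fin N → ι, matchWeight g (blockEncode B (Fin.cons a x : Fin (N + 1) → ι)) y
        ≤ ∑ a, ∑ x : Fin N → ι, ∑ k ∈ range (y.length / g + 1),
            8 * (matchWeight g (B a) (y.take (k * g))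
              * matchWeight g (blockEncode B x) (y.drop (k * g))) :=
          sum_le_sum fun a _ => sum_le_sum fun x _ => by
            rw [blockEncode_cons]
            exact matchWeight_append_le hg _ _ _
      _ = ∑ k ∈ range (y.length / g + 1), 8 * ((∑ a, matchWeight g (B a) (y.take (k * g)))
            * ∑ x : Fin N → ι, matchWeight g (blockEncode B x) (y.drop (k * g))) := by
          rw [sum_congr rfl fun a _ => sum_comm, sum_comm]
          simp only [← mul_sum, ← sum_mul]
      _ ≤ ∑ k ∈ range (y.length / g + 1), 8 * ((∑ a, matchWeight g (B a) (y.take (k * g)))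
            * (8 * S) ^ N) :=
          sum_le_sum fun k _ => by
            have : 0 ≤ ∑ a, matchWeight g (B a) (y.take (k * g)) :=
              sum_nonneg fun a _ => (matchWeight_pos g _ _).le
            gcongr
            exact ih _
      _ = 8 * (∑ k ∈ range (y.length / g + 1), ∑ a, matchWeight g (B a) (y.take (k * g)))
            * (8 * S) ^ N := by
          rw [← mul_sum, ← sum_mul, mul_assoc]
      _ ≤ 8 * S * (8 * S) ^ N := by gcongr; exact hS y
      _ = (8 * S) ^ (N + 1) := (pow_succ' _ _).symm

theorem card_wellMatched_mul_two_pow_le_sum (hg : 0 < g) (B : ι → List α) (j : ℕ) (y : List α) :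
    #(wellMatched B (j * g) y) * 2 ^ j ≤ ∑ a, matchWeight g (B a) y := by
  rw [← nsmul_eq_mul]
  refine (card_nsmul_le_sum _ _ _ fun a ha => ?_).trans
    (sum_le_sum_of_subset_of_nonneg (subset_univ _) fun a _ _ => (matchWeight_pos g _ y).le)
  exact pow_le_matchWeight hg (mem_wellMatched.1 ha)

theorem card_wellMatched_blockEncode_mul_two_pow_le (hg : 0 < g)
    (hB : ∀ a, (B a).length = s * g) (hl : ∀ y, #(wellMatched B (e * g) y) ≤ l)
    (hcard : 16 * (2 * s * (l * 2 ^ s + Fintype.card ι * 2 ^ e) + 2 * Fintype.card ι)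
      ≤ Fintype.card ι * 4 ^ e) (N : ℕ) (y : List α) :
    #(wellMatched (blockEncode B (N := N)) (2 * (e * g) * N) y) * 2 ^ N
      ≤ Fintype.card ι ^ N := by
  set q := Fintype.card ι
  set S : ℝ := (2 * s : ℕ) * (l * 2 ^ s + q * 2 ^ e) + 2 * q with hS
  have hblock : ∀ y : List α,
      ∑ k ∈ range (y.length / g + 1), ∑ a, matchWeight g (B a) (y.take (k * g)) ≤ S :=
    fun y => by
      refine sum_range_le_of_geometric_tail (by positivity) (by positivity)
        (fun k _ => sum_matchWeight_le hg hB (hl _)) fun k hk hsk =>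
          sum_matchWeight_le_of_length_eq hg hB ?_ hsk
      rw [List.length_take, min_eq_left]
      exact (Nat.mul_le_mul_right g (Nat.le_of_lt_succ hk)).trans (Nat.div_mul_le_self _ _)
  have hmoment := (card_wellMatched_mul_two_pow_le_sum hg (blockEncode B (N := N))
    (2 * e * N) y).trans (sum_matchWeight_blockEncode_le hg hblock N y)
  rw [show 2 * e * N * g = 2 * (e * g) * N by ring] at hmoment
  set F := wellMatched (blockEncode B (N := N)) (2 * (e * g) * N) y
  have hcard' : 16 * S ≤ q * 4 ^ e := by
    rw [hS]
    exact_mod_cast hcard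
  have hscaled : (#F * 2 ^ N : ℝ) * (4 ^ e) ^ N ≤ q ^ N * (4 ^ e) ^ N := by
    calc (#F * 2 ^ N : ℝ) * (4 ^ e) ^ N = #F * 2 ^ (2 * e * N) * 2 ^ N := by
          rw [pow_mul 2 (2 * e), pow_mul 2 2]
          norm_num
          ring
      _ ≤ (8 * S) ^ N * 2 ^ N := by gcongr
      _ = (16 * S) ^ N := by rw [← mul_pow]; ring
      _ ≤ (q * 4 ^ e) ^ N := by gcongr
      _ = q ^ N * (4 ^ e) ^ N := mul_pow _ _ _
  exact_mod_cast le_of_mul_le_mul_right hscaled (by positivity)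

theorem exists_pos_mul_le_two_pow {c : ℕ} (hc : 0 < c) : ∃ e, 0 < e ∧ c * e ≤ 2 ^ e := by
  refine ⟨4 * c, by positivity, ?_⟩
  calc c * (4 * c) = (2 * c) ^ 2 := by ring
    _ ≤ (2 ^ (2 * c)) ^ 2 := by gcongr; exact Nat.lt_two_pow_self.le
    _ = 2 ^ (4 * c) := by rw [← pow_mul]; congr 1; ring

theorem mul_add_le_mul_four_pow {s e l q : ℕ} (hs : 0 < s) (he : 65 * s ≤ 2 ^ e)
    (hq : 32 * s * l * 2 ^ s ≤ q) :
    16 * (2 * s * (l * 2 ^ s + q * 2 ^ e) + 2 * q) ≤ q * 4 ^ e := by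
  have hfactor : 1 + (32 * s * 2 ^ e + 32) ≤ 4 ^ e := by
    calc 1 + (32 * s * 2 ^ e + 32) ≤ 33 * (s * 2 ^ e) + 32 * s * 2 ^ e := by
          have : 0 < s * 2 ^ e := by positivity
          lia
      _ = 65 * s * 2 ^ e := by ring
      _ ≤ 2 ^ e * 2 ^ e := by gcongr
      _ = 4 ^ e := by rw [← mul_pow]; norm_num
  calc 16 * (2 * s * (l * 2 ^ s + q * 2 ^ e) + 2 * q)
      = 32 * s * l * 2 ^ s + q * (32 * s * 2 ^ e + 32) := by ring
    _ ≤ q + q * (32 * s * 2 ^ e + 32) := by gcongr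
    _ = q * (1 + (32 * s * 2 ^ e + 32)) := by ring
    _ ≤ q * 4 ^ e := by gcongr

theorem exists_inner_code {h : ℕ} (hh : 0 < h) :
    ∃ τ > 0, ∃ q ≥ 2, ∃ B : Fin q → List Bool, (∀ a, (B a).length = h * τ) ∧
      ∀ N y, #(wellMatched (blockEncode B (N := N)) (2 * τ * N) y) * 2 ^ N ≤ q ^ N := by
  obtain ⟨e, he, hexp⟩ := exists_pos_mul_le_two_pow (c := 65 * h) (by positivity)
  set q := 32 * (h * e) * (18 * h ^ 2) * 2 ^ (h * e)
  have hq2 : 2 ≤ q := by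
    have : 0 < h * e * (18 * h ^ 2) * 2 ^ (h * e) := by positivity
    lia
  set g := 2 * ((56 * h) ^ 2) ^ q
  refine ⟨e * g, by positivity, q, hq2, blockCode h e q, length_blockCode h e q, ?_⟩
  simpa only [Fintype.card_fin] using card_wellMatched_blockEncode_mul_two_pow_le (s := h * e)
    (by positivity) (fun a => (length_blockCode h e q a).trans (mul_assoc h e g).symm)
    (card_wellMatched_blockCode_le h e q hh he)
    (mul_add_le_mul_four_pow (by positivity) (by rwa [← mul_assoc])
      (by rw [Fintype.card_fin]))

end Concatenation

section OuterCode

variable {Ω : Type*} [Fintype Ω] [DecidableEq Ω]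

theorem sum_pow_card_insert_inter_le (C S : Finset Ω) {K : ℝ} (hK : 0 ≤ K) :
    ∑ z ∈ Cᶜ, K ^ #(insert z C ∩ S) ≤ K ^ #(C ∩ S) * (#Cᶜ + K * #S) := by
  have hterm : ∀ z ∈ Cᶜ,
      K ^ #(insert z C ∩ S) ≤ K ^ #(C ∩ S) * (1 + if z ∈ S then K else 0) := fun z hz => by
    have hpow : 0 ≤ K ^ #(C ∩ S) := by positivity
    split_ifs with hzS
    · rw [insert_inter_of_mem hzS,
        card_insert_of_notMem fun h => mem_compl.1 hz (mem_inter.1 h).1, pow_succ]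
      exact mul_le_mul_of_nonneg_left (by linarith) hpow
    · rw [insert_inter_of_notMem hzS, add_zero, mul_one]
  refine (sum_le_sum hterm).trans ?_
  rw [← mul_sum, sum_add_distrib, ← sum_filter, sum_const, sum_const, nsmul_one, nsmul_eq_mul,
    mul_comm K]
  gcongr
  exact fun z hz => (mem_filter.1 hz).2

/-- The code is built greedily: a uniformly random new word multiplies the potential
`∑ i, K ^ #(C ∩ S i)` by at most `1 + 2 * K * p` on average. -/
theorem exists_card_eq_sum_pow_card_inter_le [Fintype ι] (S : ι → Finset Ω) {K p : ℝ} {M : ℕ}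
    (hK : 0 ≤ K) (hp : 0 ≤ p) (hS : ∀ i, #(S i) ≤ p * Fintype.card Ω)
    (hM : 2 * M ≤ Fintype.card Ω) :
    ∃ C : Finset Ω, #C = M ∧
      ∑ i, K ^ #(C ∩ S i) ≤ Fintype.card ι * (1 + 2 * K * p) ^ M := by
  induction M with
  | zero => exact ⟨∅, by simp⟩
  | succ M ih =>
    obtain ⟨C, hC, hsum⟩ := ih (by lia)
    have hhalf : Fintype.card Ω ≤ 2 * #Cᶜ := by
      rw [card_compl, hC]
      lia
    have hne : Cᶜ.Nonempty := card_pos.1 (by lia)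
    have haverage : ∑ z ∈ Cᶜ, ∑ i, K ^ #(insert z C ∩ S i)
        ≤ ∑ z ∈ Cᶜ, Fintype.card ι * (1 + 2 * K * p) ^ (M + 1) := by
      have hset : ∀ i, (#(S i) : ℝ) ≤ p * (2 * #Cᶜ) := fun i =>
        (hS i).trans (mul_le_mul_of_nonneg_left (by exact_mod_cast hhalf) hp)
      calc ∑ z ∈ Cᶜ, ∑ i, K ^ #(insert z C ∩ S i)
          = ∑ i, ∑ z ∈ Cᶜ, K ^ #(insert z C ∩ S i) := sum_comm
        _ ≤ ∑ i, K ^ #(C ∩ S i) * (#Cᶜ + K * #(S i)) :=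
            sum_le_sum fun i _ => sum_pow_card_insert_inter_le C (S i) hK
        _ ≤ ∑ i, K ^ #(C ∩ S i) * (#Cᶜ + K * (p * (2 * #Cᶜ))) := by
            gcongr
            exact hset _
        _ = #Cᶜ * (1 + 2 * K * p) * ∑ i, K ^ #(C ∩ S i) := by
            rw [← sum_mul]
            ring
        _ ≤ #Cᶜ * (1 + 2 * K * p) * (Fintype.card ι * (1 + 2 * K * p) ^ M) := by gcongr
        _ = ∑ z ∈ Cᶜ, Fintype.card ι * (1 + 2 * K * p) ^ (M + 1) := by
            rw [sum_const, nsmul_eq_mul]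
            ring
    obtain ⟨z, hz, hle⟩ := exists_le_of_sum_le hne haverage
    exact ⟨insert z C, by rw [card_insert_of_notMem (mem_compl.1 hz), hC], hle⟩

theorem one_add_pow_le_four {x : ℝ} {M : ℕ} (hx : 0 ≤ x) (hM : M * x ≤ 1) : (1 + x) ^ M ≤ 4 := by
  calc (1 + x) ^ M ≤ Real.exp x ^ M := by
        gcongr
        linarith [Real.add_one_le_exp x]
    _ = Real.exp (M * x) := (Real.exp_nat_mul x M).symm
    _ ≤ Real.exp 1 := Real.exp_le_exp.2 hM
    _ ≤ 4 := by linarith [Real.exp_one_lt_three]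

theorem exists_card_eq_two_pow_card_inter_le [Fintype ι] (S : ι → Finset Ω) {N κ a : ℕ}
    (hS : ∀ i, #(S i) * 2 ^ N ≤ Fintype.card Ω) (hΩ : 2 ^ N ≤ Fintype.card Ω)
    (hκ : 2 * κ + 1 ≤ N) (hι : Fintype.card ι ≤ 2 ^ a) :
    ∃ C : Finset Ω, #C = 2 ^ κ ∧ ∀ i, κ * #(C ∩ S i) ≤ a + 2 := by
  have hsize : 2 * 2 ^ κ ≤ Fintype.card Ω :=
    ((pow_succ' 2 κ).symm.trans_le (pow_le_pow_right₀ one_le_two (by lia))).trans hΩ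
  obtain ⟨C, hC, hsum⟩ := exists_card_eq_sum_pow_card_inter_le S (K := 2 ^ κ) (p := 1 / 2 ^ N)
    (by positivity) (by positivity)
    (fun i => by
      rw [one_div_mul_eq_div, le_div_iff₀ (by positivity)]
      exact_mod_cast hS i) hsize
  have hgrowth : (1 + 2 * 2 ^ κ * (1 / 2 ^ N) : ℝ) ^ 2 ^ κ ≤ 4 := by
    refine one_add_pow_le_four (by positivity) ?_
    rw [mul_one_div, mul_div_assoc', div_le_one (by positivity)]
    calc ((2 ^ κ : ℕ) * (2 * 2 ^ κ) : ℝ) = 2 ^ (2 * κ + 1) := by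
          push_cast
          ring
      _ ≤ 2 ^ N := pow_le_pow_right₀ one_le_two hκ
  refine ⟨C, hC, fun i => (pow_le_pow_iff_right₀ (one_lt_two : (1 : ℝ) < 2)).1 ?_⟩
  calc (2 : ℝ) ^ (κ * #(C ∩ S i)) = (2 ^ κ) ^ #(C ∩ S i) := pow_mul _ _ _
    _ ≤ ∑ i, (2 ^ κ : ℝ) ^ #(C ∩ S i) :=
        single_le_sum (f := fun i => (2 ^ κ : ℝ) ^ #(C ∩ S i)) (fun _ _ => by positivity)
          (mem_univ i)
    _ ≤ Fintype.card ι * (1 + 2 * 2 ^ κ * (1 / 2 ^ N)) ^ 2 ^ κ := hsum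
    _ ≤ 2 ^ a * 4 := by
        gcongr
        exact_mod_cast hι
    _ = 2 ^ (a + 2) := by
        rw [pow_add]
        norm_num

theorem card_sigma_vector_bool_le (n : ℕ) :
    Fintype.card (Σ j : Fin (n + 1), List.Vector Bool j) ≤ 2 ^ (n + 1) := by
  simp only [Fintype.card_sigma, card_vector, Fintype.card_bool]
  rw [Fin.sum_univ_eq_sum_range (2 ^ ·)]
  exact (Nat.geomSum_lt le_rfl fun _ => mem_range.1).le

theorem exists_code_card_inter_wellMatched_le {X : Ω → List Bool} {t N κ : ℕ} (n : ℕ)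
    (hX : ∀ y, #(wellMatched X t y) * 2 ^ N ≤ Fintype.card Ω) (hΩ : 2 ^ N ≤ Fintype.card Ω)
    (hκ : 2 * κ + 1 ≤ N) :
    ∃ C : Finset Ω, #C = 2 ^ κ ∧
      ∀ y : List Bool, y.length ≤ n → κ * #(C ∩ wellMatched X t y) ≤ n + 3 := by
  obtain ⟨C, hC, hinter⟩ := exists_card_eq_two_pow_card_inter_le
    (fun y : Σ j : Fin (n + 1), List.Vector Bool j => wellMatched X t y.2.toList)
    (fun y => hX y.2.toList) hΩ hκ (card_sigma_vector_bool_le n)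
  exact ⟨C, hC, fun y hy => hinter ⟨⟨y.length, Nat.lt_succ_of_le hy⟩, y, rfl⟩⟩

end OuterCode

section ListDecoding

theorem wellMatched_append_subset [Fintype ι] (B : ι → List α) (p : List α) {t t' : ℕ}
    (ht : t + 2 * p.length ≤ t') (y : List α) :
    wellMatched (fun a => B a ++ p) t' y ⊆ wellMatched B t y := fun a ha => by
  have hLCS := LCS_append_left_le (B a) p y
  rw [mem_wellMatched, List.length_append] at ha
  rw [mem_wellMatched]
  lia

variable {Ω : Type*} [Fintype Ω] [DecidableEq Ω] [DecidableEq α] {X : Ω → List α}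
  {C : Finset Ω} {n t L : ℕ}

/-- Words with the same image all match it with the maximal surplus `n`. -/
theorem card_le_mul_card_image_of_card_inter_wellMatched_le (hX : ∀ x, (X x).length = n)
    (ht : t ≤ n) (hC : ∀ y : List α, y.length = n → #(C ∩ wellMatched X t y) ≤ L) :
    #C ≤ L * #(C.image X) := by
  refine card_le_mul_card_image C L fun b hb => ?_
  obtain ⟨x₀, -, rfl⟩ := mem_image.1 hb
  refine (card_le_card fun x hx => ?_).trans (hC (X x₀) (hX x₀))
  obtain ⟨hxC, hxx₀⟩ := mem_filter.1 hx
  refine mem_inter.2 ⟨hxC, mem_wellMatched.2 ?_⟩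
  have hself := length_le_LCS (List.Sublist.refl (X x₀)) (List.Sublist.refl (X x₀))
  rw [hxx₀]
  rw [hX] at hself ⊢
  lia

theorem listDecodable_image {ε γ δ : ℝ} (hX : ∀ x, (X x).length = n) (ht : (t : ℝ) ≤ ε * n)
    (hγ : 0 ≤ γ) (hδ : 0 ≤ δ) (hγδ : γ + 2 * δ ≤ 1 - ε)
    (hC : ∀ y : List α, y.length ≤ 2 * n → #(C ∩ wellMatched X t y) ≤ L) :
    listDecodable (C.image X) ⌊δ * n⌋₊ ⌊γ * n⌋₊ L := by
  intro y
  set Z := {x | x ∈ C.image X ∧ ∃ u : List α, u.Sublist x ∧ u.Sublist y ∧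
    x.length - u.length ≤ ⌊δ * n⌋₊ ∧ y.length - u.length ≤ ⌊γ * n⌋₊}
  have hbudget : (γ + 2 * δ) * n ≤ (1 - ε) * n := by gcongr
  have hclose : ∀ x, X x ∈ Z → y.length ≤ 2 * n ∧ x ∈ wellMatched X t y := by
    rintro x ⟨-, u, hux, huy, hdel, hins⟩
    have hLCS : (u.length : ℝ) ≤ LCS (X x) y := Nat.cast_le.2 (length_le_LCS hux huy)
    have hun : u.length ≤ n := hX x ▸ hux.length_le
    rw [hX] at hdel
    have hdel : (n - u.length : ℝ) ≤ δ * n := by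
      rw [← Nat.cast_sub hun]
      exact (Nat.cast_le.2 hdel).trans (Nat.floor_le (by positivity))
    have hins : (y.length - u.length : ℝ) ≤ γ * n := by
      rw [← Nat.cast_sub huy.length_le]
      exact (Nat.cast_le.2 hins).trans (Nat.floor_le (by positivity))
    have hun : (u.length : ℝ) ≤ n := Nat.cast_le.2 hun
    have hy : (y.length : ℝ) ≤ 2 * n := by
      linarith [t.cast_nonneg (α := ℝ), mul_nonneg hδ n.cast_nonneg]
    have hsurplus : (n + y.length + t : ℝ) ≤ 3 * LCS (X x) y := by linarith
    rw [mem_wellMatched, hX]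
    exact ⟨by exact_mod_cast hy, by exact_mod_cast hsurplus⟩
  rw [Nat.cast_le]
  rcases Z.eq_empty_or_nonempty with hempty | ⟨z, hz⟩
  · rw [hempty, Set.ncard_empty]
    exact zero_le
  obtain ⟨x, -, rfl⟩ := mem_image.1 hz.1
  have hsub : Z ⊆ ((C ∩ wellMatched X t y).image X : Finset (List α)) := fun z' hz' => by
    obtain ⟨x', hx', rfl⟩ := mem_image.1 hz'.1
    exact mem_coe.2 (mem_image_of_mem X (mem_inter.2 ⟨hx', (hclose x' hz').2⟩))
  calc Z.ncard ≤ #((C ∩ wellMatched X t y).image X) := by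
        rw [← Set.ncard_coe_finset]
        exact Set.ncard_le_ncard hsub (finite_toSet _)
    _ ≤ #(C ∩ wellMatched X t y) := card_image_le
    _ ≤ L := hC y (hclose x hz).1

end ListDecoding

section Parameters

theorem exists_code_of_inner_code {h τ q : ℕ} {B : Fin q → List Bool} (hτ : 0 < h * τ)
    (hq : 2 ≤ q) (hB : ∀ a, (B a).length = h * τ)
    (hBτ : ∀ N y, #(wellMatched (blockEncode B (N := N)) (2 * τ * N) y) * 2 ^ N ≤ q ^ N) {n : ℕ}
    (hn : 16 * (h * τ) ≤ n) :
    ∃ X : (Fin (n / (h * τ)) → Fin q) → List Bool, ∃ C : Finset (Fin (n / (h * τ)) → Fin q),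
      (∀ x, (X x).length = n) ∧ #C = 2 ^ (n / (h * τ) / 4) ∧ ∀ y : List Bool, y.length ≤ 2 * n →
        #(C ∩ wellMatched X (2 * τ * (n / (h * τ)) + 2 * (h * τ)) y) ≤ 16 * (h * τ) := by
  set m := h * τ
  set N := n / m
  have hN : 16 ≤ N := (Nat.le_div_iff_mul_le hτ).2 hn
  have hnN : m * N + n % m = n := Nat.div_add_mod n m
  have hρ : n % m < m := Nat.mod_lt n hτ
  have hnκ : n ≤ 8 * m * (N / 4) := by
    calc n ≤ m * (N + 1) := by rw [Nat.mul_succ]; lia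
      _ ≤ m * (8 * (N / 4)) := by gcongr; lia
      _ = 8 * m * (N / 4) := by ring
  set X : (Fin N → Fin q) → List Bool :=
    fun x => blockEncode B x ++ List.replicate (n % m) false
  have hfew : ∀ y, #(wellMatched X (2 * τ * N + 2 * m) y) * 2 ^ N
      ≤ Fintype.card (Fin N → Fin q) := fun y => by
    rw [Fintype.card_fun, Fintype.card_fin, Fintype.card_fin]
    refine (Nat.mul_le_mul_right _ (card_le_card ?_)).trans (hBτ N y)
    exact wellMatched_append_subset _ _ (by rw [List.length_replicate]; lia) y
  obtain ⟨C, hC, hinter⟩ := exists_code_card_inter_wellMatched_le (κ := N / 4) (2 * n) hfew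
    (by simpa using Nat.pow_le_pow_left hq N) (by lia)
  refine ⟨X, C, fun x => ?_, hC, fun y hy => ?_⟩
  · rw [List.length_append, length_blockEncode hB, List.length_replicate, hnN]
  · refine Nat.le_of_lt_succ (Nat.lt_of_mul_lt_mul_left (a := N / 4) ?_)
    calc N / 4 * #(C ∩ wellMatched X (2 * τ * N + 2 * m) y) ≤ 2 * n + 3 := hinter y hy
      _ < 2 * (8 * m * (N / 4)) + N / 4 := by lia
      _ = N / 4 * (16 * m + 1) := by ring

theorem mul_two_rpow_le_two_pow_div {m n : ℕ} (hm : 0 < m) (hn : 128 * m ^ 2 ≤ n) :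
    16 * m * (2 : ℝ) ^ (1 / (16 * m : ℝ) * n) ≤ 2 ^ (n / m / 4) := by
  set κ := n / m / 4
  have hκ : 32 * m ≤ κ := by
    rw [Nat.le_div_iff_mul_le (by norm_num), Nat.le_div_iff_mul_le hm]
    lia
  have hnκ : n ≤ 8 * m * κ := by
    calc n ≤ m * (n / m + 1) := (Nat.lt_mul_div_succ n hm).le
      _ ≤ m * (8 * κ) := by gcongr; lia
      _ = 8 * m * κ := by ring
  have hκR : 32 * (m : ℝ) ≤ κ := by exact_mod_cast hκ
  have hhalf : 1 / (16 * m : ℝ) * n ≤ κ / 2 := by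
    have hnκ : (n : ℝ) ≤ 8 * m * κ := by exact_mod_cast hnκ
    rw [one_div_mul_eq_div, div_le_iff₀ (by positivity)]
    linarith
  have hmpow : 16 * m ≤ (2 : ℝ) ^ (16 * m : ℝ) := by
    exact_mod_cast (Nat.lt_two_pow_self (n := 16 * m)).le
  calc 16 * m * (2 : ℝ) ^ (1 / (16 * m : ℝ) * n)
      ≤ 2 ^ (16 * m : ℝ) * 2 ^ (1 / (16 * m : ℝ) * n) := by gcongr
    _ = 2 ^ (16 * m + 1 / (16 * m : ℝ) * n) := (Real.rpow_add two_pos _ _).symm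
    _ ≤ 2 ^ (κ : ℝ) := Real.rpow_le_rpow_of_exponent_le one_le_two (by linarith)
    _ = 2 ^ κ := Real.rpow_natCast _ _

theorem surplus_le {h τ n : ℕ} {ε : ℝ} (hε : 4 ≤ ε * h) (hn : h * τ * h ≤ n) :
    ((2 * τ * (n / (h * τ)) + 2 * (h * τ) : ℕ) : ℝ) ≤ ε * n := by
  set t := 2 * τ * (n / (h * τ)) + 2 * (h * τ) with ht
  have hth : t * h ≤ 4 * n := by
    calc t * h = 2 * (h * τ * (n / (h * τ))) + 2 * (h * τ * h) := by rw [ht]; ring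
      _ ≤ 2 * n + 2 * n := by gcongr; exact Nat.mul_div_le n (h * τ)
      _ = 4 * n := by ring
  have hh : (0 : ℝ) < h := by
    refine (Nat.cast_nonneg h).lt_of_ne fun h0 => ?_
    rw [← h0, mul_zero] at hε
    linarith
  refine le_of_mul_le_mul_right ?_ hh
  calc (t : ℝ) * h ≤ 4 * n := by exact_mod_cast hth
    _ ≤ ε * h * n := by gcongr
    _ = ε * n * h := by ring

end Parameters

end InsDel

theorem listDecodable.mono {α : Type*} {C : Finset (List α)} {D I : ℕ} {L L' : ℝ}
    (hC : listDecodable C D I L) (hL : L ≤ L') : listDecodable C D I L' :=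
  fun y => (hC y).trans hL

open InsDel in
theorem stmt0_general :
    ∀ ε : ℝ, 0 < ε →
      ∃ R : ℝ, 0 < R ∧ ∃ c : ℝ, 0 < c ∧ ∃ n₀ : ℕ, ∀ n : ℕ, n₀ ≤ n →
        ∃ C : Finset (List Bool),
          (∀ x ∈ C, x.length = n) ∧
          (2 : ℝ) ^ (R * n) ≤ (C.card : ℝ) ∧
          ∀ γ δ : ℝ, 0 ≤ γ → 0 ≤ δ → γ + 2 * δ ≤ 1 - ε →
            listDecodable C ⌊δ * n⌋₊ ⌊γ * n⌋₊ c := by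
  intro ε hε
  obtain ⟨h, hh⟩ := exists_nat_ge (4 / min ε 1)
  have hhmin : 4 ≤ min ε 1 * h := (div_le_iff₀' (by positivity)).1 hh
  have hh0 : 0 < h := Nat.pos_of_ne_zero fun h0 => by norm_num [h0] at hhmin
  obtain ⟨τ, hτ, q, hq, B, hB, hBτ⟩ := exists_inner_code hh0
  have hm : 0 < h * τ := Nat.mul_pos hh0 hτ
  refine ⟨1 / (16 * (h * τ : ℕ)), by positivity, (16 * (h * τ) : ℕ), by positivity,
    128 * (h * τ) ^ 2 + h * τ * h, fun n hn => ?_⟩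
  have hsq := Nat.le_self_pow two_ne_zero (h * τ)
  obtain ⟨X, C, hX, hC, hlist⟩ := exists_code_of_inner_code hm hq hB hBτ (n := n) (by lia)
  have ht := surplus_le (τ := τ) (n := n) hhmin (by lia)
  refine ⟨C.image X, fun _ hx => ?_, ?_, fun γ δ hγ hδ hγδ => listDecodable_image hX
    (ht.trans (by gcongr; exact min_le_left ε 1)) hγ hδ hγδ hlist⟩
  · obtain ⟨x, -, rfl⟩ := Finset.mem_image.1 hx
    exact hX x
  · have htn : 2 * τ * (n / (h * τ)) + 2 * (h * τ) ≤ n := by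
      exact_mod_cast ht.trans (mul_le_of_le_one_left n.cast_nonneg (min_le_right ε 1))
    have hcard := card_le_mul_card_image_of_card_inter_wellMatched_le hX htn
      fun y hy => hlist y (by lia)
    rw [hC] at hcard
    refine le_of_mul_le_mul_left ((mul_two_rpow_le_two_pow_div hm (by lia)).trans ?_)
      (by positivity : (0 : ℝ) < 16 * (h * τ : ℕ))
    exact_mod_cast hcard

theorem stmt0 :
    ∀ ε : ℝ, ε ∈ Set.Ioo (0 : ℝ) 1 →
      ∃ R : ℝ, 0 < R ∧ ∃ c : ℝ, 0 < c ∧ ∃ n₀ : ℕ, ∀ n : ℕ, n₀ ≤ n →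
        ∃ C : Finset (List Bool),
          (∀ x ∈ C, x.length = n) ∧
          (2 : ℝ) ^ (R * n) ≤ (C.card : ℝ) ∧
          ∀ γ δ : ℝ, 0 ≤ γ → 0 ≤ δ → γ + 2 * δ ≤ 1 - ε →
            listDecodable C ⌊δ * n⌋₊ ⌊γ * n⌋₊
              (c * (2 : ℝ) ^ (2 ^ (2 ^ logStar n))) := by
  intro ε hε
  obtain ⟨R, hR, c, hc, n₀, hcode⟩ := stmt0_general ε hε.1
  refine ⟨R, hR, c, hc, n₀, fun n hn => ?_⟩
  obtain ⟨C, hlength, hcard, hlist⟩ := hcode n hn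
  exact ⟨C, hlength, hcard, fun γ δ hγ hδ hγδ =>
    (hlist γ δ hγ hδ hγδ).mono (le_mul_of_one_le_right hc.le (one_le_pow₀ one_le_two))⟩
end

section
/- Let q ≥ 2 be an integer and let δ, γ ≥ 0 be reals satisfying δ/(1 − 1/q) + γ/(q − 1) ≥ 1. Then for every integer L ≥ 1 and every real R > 0 there exists n₀ such that for all n ≥ n₀: every code C ⊆ (Fin q)ⁿ that is list-decodable from ⌈δn⌉ deletions and ⌈γn⌉ insertions with list size L satisfies |C| < 2^(R·n). In other words, there is no family of constant rate q-ary codes list-decodable from δn deletions and γn insertions. -/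
/-!
Cut every codeword after its first `m` letters. Some letter `a` fills at least a `1/q` fraction of
the prefix, so `(1 - 1/q) m` deletions turn the prefix into a power of `a`. The remaining `n - m`
letters are a subsequence of `n - m` consecutive copies of the alphabet, which costs
`(q - 1)(n - m)` insertions. The hypothesis on `δ` and `γ` is exactly what allows a choice of `m`
within both budgets. Hence `q` received words, one for each `a`, reach every codeword, and a
list-decodable code has at most `q L` codewords, whatever `n` is.
-/

open Filter

section Indel

variable {α : Type*} {D D' I I' : ℕ} {x x' y y' : List α}

/-- The word `y` can be obtained from `x` by at most `D` deletions and at most `I` insertions; this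
is the relation between codewords and received words in `listDecodable`. -/
def IsIndelClose (D I : ℕ) (x y : List α) : Prop :=
  ∃ u : List α, u.Sublist x ∧ u.Sublist y ∧ x.length - u.length ≤ D ∧ y.length - u.length ≤ I

theorem IsIndelClose.mono (h : IsIndelClose D I x y) (hD : D ≤ D') (hI : I ≤ I') :
    IsIndelClose D' I' x y := by
  obtain ⟨u, hux, huy, hdel, hins⟩ := h
  exact ⟨u, hux, huy, hdel.trans hD, hins.trans hI⟩

theorem IsIndelClose.append (h : IsIndelClose D I x y) (h' : IsIndelClose D' I' x' y') :
    IsIndelClose (D + D') (I + I') (x ++ x') (y ++ y') := by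
  obtain ⟨u, hux, huy, hdel, hins⟩ := h
  obtain ⟨u', hux', huy', hdel', hins'⟩ := h'
  refine ⟨u ++ u', hux.append hux', huy.append huy', ?_, ?_⟩ <;>
    simp only [List.length_append] <;> omega

theorem isIndelClose_of_sublist_left (h : y.Sublist x) :
    IsIndelClose (x.length - y.length) 0 x y :=
  ⟨y, h, List.Sublist.refl y, le_rfl, (Nat.sub_self _).le⟩

theorem isIndelClose_of_sublist_right (h : x.Sublist y) :
    IsIndelClose 0 (y.length - x.length) x y :=
  ⟨x, List.Sublist.refl x, h, (Nat.sub_self _).le, le_rfl⟩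

theorem listDecodable.card_le_card_mul {ι : Type*} [Fintype ι] {C : Finset (List α)} {L : ℝ}
    (hC : listDecodable C D I L) (y : ι → List α)
    (hcover : ∀ x ∈ C, ∃ i, IsIndelClose D I x (y i)) :
    (C.card : ℝ) ≤ Fintype.card ι * L := by
  classical
  let ball (i : ι) : Finset (List α) := {x ∈ C | IsIndelClose D I x (y i)}
  have hball (i : ι) : ((ball i).card : ℝ) ≤ L := by
    rw [← Set.ncard_coe_finset, Finset.coe_filter]
    exact hC (y i)
  have hsub : C ⊆ Finset.univ.biUnion ball := by
    intro x hx
    obtain ⟨i, hi⟩ := hcover x hx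
    exact Finset.mem_biUnion.2 ⟨i, Finset.mem_univ i, Finset.mem_filter.2 ⟨hx, hi⟩⟩
  calc (C.card : ℝ) ≤ ∑ i, ((ball i).card : ℝ) := by
        exact_mod_cast (Finset.card_le_card hsub).trans Finset.card_biUnion_le
    _ ≤ ∑ _i : ι, L := Finset.sum_le_sum fun i _ => hball i
    _ = Fintype.card ι * L := by rw [Finset.sum_const, Finset.card_univ, nsmul_eq_mul]

end Indel

section Words

variable {α : Type*}

theorem sublist_flatten_replicate_of_subset {l s : List α} (h : l ⊆ s) :
    l.Sublist (List.replicate l.length s).flatten := by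
  induction l with
  | nil => exact List.nil_sublist _
  | cons a l ih =>
    obtain ⟨ha, hl⟩ := List.cons_subset.1 h
    exact (List.singleton_sublist.2 ha).append (ih hl)

variable [Fintype α]

theorem exists_length_le_card_mul_count [Nonempty α] [DecidableEq α] (l : List α) :
    ∃ a, l.length ≤ Fintype.card α * l.count a := by
  have hsum : ∑ a, l.count a = l.length := by
    simpa only [Multiset.coe_count, Multiset.coe_card] using
      Multiset.sum_count_eq_card (m := (l : Multiset α)) fun a _ => Finset.mem_univ a
  have hle : ∑ _a : α, l.length ≤ ∑ a, Fintype.card α * l.count a := by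
    rw [← Finset.mul_sum, hsum, Finset.sum_const, Finset.card_univ, smul_eq_mul]
  obtain ⟨a, -, ha⟩ := Finset.exists_le_of_sum_le Finset.univ_nonempty hle
  exact ⟨a, ha⟩

theorem exists_isIndelClose_replicate [Nonempty α] (x : List α) :
    ∃ a, IsIndelClose (x.length - x.length ⌈/⌉ Fintype.card α) 0 x
      (List.replicate (x.length ⌈/⌉ Fintype.card α) a) := by
  classical
  obtain ⟨a, ha⟩ := exists_length_le_card_mul_count x
  have hcount : x.length ⌈/⌉ Fintype.card α ≤ x.count a :=
    (ceilDiv_le_iff_le_mul Fintype.card_pos).2 ha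
  refine ⟨a, ?_⟩
  simpa only [List.length_replicate] using
    isIndelClose_of_sublist_left (List.replicate_sublist_iff.2 hcount)

variable (α) in
/-- `k` consecutive copies of the alphabet, each listed in the same arbitrary order: a word
containing every word of length `k` as a subsequence. -/
noncomputable def universalWord (k : ℕ) : List α :=
  (List.replicate k Finset.univ.toList).flatten

theorem length_universalWord (k : ℕ) : (universalWord α k).length = k * Fintype.card α := by
  simp [universalWord]

theorem isIndelClose_universalWord (x : List α) :
    IsIndelClose 0 (x.length * (Fintype.card α - 1)) x (universalWord α x.length) := by
  have hsub : x.Sublist (universalWord α x.length) :=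
    sublist_flatten_replicate_of_subset fun a _ => Finset.mem_toList.2 (Finset.mem_univ a)
  simpa only [length_universalWord, Nat.mul_sub_one] using isIndelClose_of_sublist_right hsub

/-- The received word `a ^ ⌈m / q⌉` followed by `k` copies of the `q`-letter alphabet, aimed at
words of length `m + k` whose most frequent letter among the first `m` is `a`. -/
noncomputable def receivedWord (m k : ℕ) (a : α) : List α :=
  List.replicate (m ⌈/⌉ Fintype.card α) a ++ universalWord α k

theorem exists_isIndelClose_receivedWord [Nonempty α] {m : ℕ} {x : List α} (hm : m ≤ x.length) :
    ∃ a, IsIndelClose (m - m ⌈/⌉ Fintype.card α) ((x.length - m) * (Fintype.card α - 1)) x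
      (receivedWord m (x.length - m) a) := by
  obtain ⟨a, hprefix⟩ := exists_isIndelClose_replicate (x.take m)
  refine ⟨a, ?_⟩
  simpa only [receivedWord, List.take_append_drop, List.length_take_of_le hm, List.length_drop,
    add_zero, zero_add] using hprefix.append (isIndelClose_universalWord (x.drop m))

end Words

section Budget

variable {K : Type*} [Field K] [LinearOrder K] [IsStrictOrderedRing K]

theorem exists_mul_le_and_one_sub_mul_le {a b x y : K} (ha : 0 < a) (hb : 0 < b) (hx : 0 ≤ x)
    (hy : 0 ≤ y) (h : 1 ≤ x / a + y / b) :
    ∃ t, 0 ≤ t ∧ t ≤ 1 ∧ t * a ≤ x ∧ (1 - t) * b ≤ y := by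
  rcases le_total 1 (x / a) with hxa | hxa
  · exact ⟨1, zero_le_one, le_rfl, (le_div_iff₀ ha).1 hxa, by simpa using hy⟩
  · exact ⟨x / a, div_nonneg hx ha.le, hxa, (div_mul_cancel₀ x ha.ne').le,
      (le_div_iff₀ hb).1 (by linarith)⟩

theorem cast_sub_ceilDiv_le (m : ℕ) {q : ℕ} (hq : 0 < q) :
    ((m - m ⌈/⌉ q : ℕ) : K) ≤ m * (1 - 1 / q) := by
  have hceil_le : m ⌈/⌉ q ≤ m := (ceilDiv_le_iff_le_mul hq).2 (Nat.le_mul_of_pos_left m hq)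
  have hle_ceil : (m : K) / q ≤ (m ⌈/⌉ q : ℕ) := by
    rw [div_le_iff₀' (Nat.cast_pos.2 hq)]
    exact_mod_cast (ceilDiv_le_iff_le_mul hq).1 le_rfl
  rw [Nat.cast_sub hceil_le, mul_one_sub, mul_one_div]
  exact sub_le_sub_left hle_ceil _

theorem exists_sub_ceilDiv_le_and_mul_pred_le [FloorSemiring K] {q : ℕ} (hq : 2 ≤ q) {δ γ : K}
    (hδ : 0 ≤ δ) (hγ : 0 ≤ γ) (h : 1 ≤ δ / (1 - 1 / (q : K)) + γ / ((q : K) - 1)) (n : ℕ) :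
    ∃ m ≤ n, m - m ⌈/⌉ q ≤ ⌈δ * n⌉₊ ∧ (n - m) * (q - 1) ≤ ⌈γ * n⌉₊ := by
  have hq1 : (1 : K) < q := by exact_mod_cast hq
  have hp : 0 < 1 - 1 / (q : K) := sub_pos.2 ((div_lt_one (zero_lt_one.trans hq1)).2 hq1)
  have hp1 : 1 - 1 / (q : K) ≤ 1 := sub_le_self _ (by positivity)
  obtain ⟨t, ht0, ht1, htδ, htγ⟩ :=
    exists_mul_le_and_one_sub_mul_le hp (sub_pos.2 hq1) hδ hγ h
  have hn : (0 : K) ≤ n := n.cast_nonneg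
  have hmn : ⌈t * n⌉₊ ≤ n := Nat.ceil_le.2 (mul_le_of_le_one_left hn ht1)
  refine ⟨⌈t * n⌉₊, hmn, ?_, ?_⟩
  · -- Rounding `t * n` up costs less than one deletion, which the ceiling of `δ * n` absorbs.
    have hlt : ((⌈t * n⌉₊ - ⌈t * n⌉₊ ⌈/⌉ q : ℕ) : K) < ⌈δ * n⌉₊ + 1 :=
      calc ((⌈t * n⌉₊ - ⌈t * n⌉₊ ⌈/⌉ q : ℕ) : K)
          ≤ ⌈t * n⌉₊ * (1 - 1 / q) := cast_sub_ceilDiv_le _ (by omega)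
        _ < (t * n + 1) * (1 - 1 / q) :=
            mul_lt_mul_of_pos_right (Nat.ceil_lt_add_one (mul_nonneg ht0 hn)) hp
        _ = t * (1 - 1 / q) * n + (1 - 1 / q) := by ring
        _ ≤ δ * n + 1 := add_le_add (mul_le_mul_of_nonneg_right htδ hn) hp1
        _ ≤ ⌈δ * n⌉₊ + 1 := by gcongr; exact Nat.le_ceil _
    exact Nat.lt_succ_iff.1 (by exact_mod_cast hlt)
  · rw [← Nat.cast_le (α := K)]
    calc (((n - ⌈t * n⌉₊) * (q - 1) : ℕ) : K)
        = (n - ⌈t * n⌉₊) * (q - 1) := by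
          rw [Nat.cast_mul, Nat.cast_sub hmn, Nat.cast_pred (by omega)]
      _ ≤ (n - t * n) * (q - 1) :=
          mul_le_mul_of_nonneg_right (sub_le_sub_left (Nat.le_ceil _) _) (sub_pos.2 hq1).le
      _ = (1 - t) * (q - 1) * n := by ring
      _ ≤ γ * n := mul_le_mul_of_nonneg_right htγ hn
      _ ≤ ⌈γ * n⌉₊ := Nat.le_ceil _

end Budget

theorem eventually_lt_rpow_mul_natCast {b R : ℝ} (hb : 1 < b) (hR : 0 < R) (A : ℝ) :
    ∀ᶠ n : ℕ in atTop, A < b ^ (R * n) := by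
  have htendsto : Tendsto (fun n : ℕ => b ^ (R * n)) atTop atTop :=
    (tendsto_rpow_atTop_of_base_gt_one b hb).comp
      (tendsto_natCast_atTop_atTop.const_mul_atTop hR)
  exact htendsto.eventually_gt_atTop A

theorem stmt2_general {α : Type*} [Fintype α] (hα : 2 ≤ Fintype.card α) {δ γ : ℝ} (hδ : 0 ≤ δ)
    (hγ : 0 ≤ γ)
    (h : 1 ≤ δ / (1 - 1 / (Fintype.card α : ℝ)) + γ / ((Fintype.card α : ℝ) - 1))
    {n : ℕ} {L : ℝ} {C : Finset (List α)} (hlen : ∀ x ∈ C, x.length = n)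
    (hC : listDecodable C ⌈δ * n⌉₊ ⌈γ * n⌉₊ L) :
    (C.card : ℝ) ≤ Fintype.card α * L := by
  have : Nonempty α := Fintype.card_pos_iff.1 (by omega)
  obtain ⟨m, hmn, hdel, hins⟩ := exists_sub_ceilDiv_le_and_mul_pred_le hα hδ hγ h n
  refine hC.card_le_card_mul (receivedWord m (n - m)) fun x hx => ?_
  obtain rfl := hlen x hx
  obtain ⟨a, ha⟩ := exists_isIndelClose_receivedWord hmn
  exact ⟨a, ha.mono hdel hins⟩

theorem stmt2 (q : ℕ) (hq : 2 ≤ q) (δ γ : ℝ) (hδ : 0 ≤ δ) (hγ : 0 ≤ γ)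
    (h : 1 ≤ δ / (1 - 1 / (q : ℝ)) + γ / ((q : ℝ) - 1)) :
    ∀ L : ℕ, 1 ≤ L → ∀ R : ℝ, 0 < R → ∃ n₀ : ℕ, ∀ n : ℕ, n₀ ≤ n →
      ∀ C : Finset (List (Fin q)), (∀ x ∈ C, x.length = n) →
        listDecodable C ⌈δ * n⌉₊ ⌈γ * n⌉₊ (L : ℝ) →
        (C.card : ℝ) < (2 : ℝ) ^ (R * n) := by
  intro L _ R hR
  obtain ⟨n₀, hn₀⟩ := eventually_atTop.1 (eventually_lt_rpow_mul_natCast one_lt_two hR (q * L))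
  refine ⟨n₀, fun n hn C hlen hC => lt_of_le_of_lt ?_ (hn₀ n hn)⟩
  simpa only [Fintype.card_fin] using
    stmt2_general (by simpa using hq) hδ hγ (by simpa using h) hlen hC
end
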